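/- arXiv:1302.2231 — 5 statements merged into one kernel-verified Lean document; each statement's English description precedes it below -/
import Mathlib

section
/- If in addition ∫_{[1,∞)} x Π(dx) < ∞, so that the right derivative Ψ'(0+) = c − ∫_{[1,∞)} x Π(dx) exists and is finite, then α(q − αΦ₁(α)) → q·Ψ'(0+) as α → ∞. -/
/-!
Write `m = c - ∫_{[1,∞)} x Π(dx)` for the right derivative of `Ψ` at zero. Moving the linear term
over `[1,∞)` into the integral gives
`Ψ θ = m θ + σ² θ² / 2 + ∫ (e^{-θx} - 1 + θx) Π(dx)` (`laplace_integral_eq`), with nonnegative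
integrand. Hence `Ψ θ ≥ m θ`, so the equation for `Φ₁` yields `Φ₁ α ≤ q / (m + α)` for large `α`,
and `Φ₁ α → 0+`. Dividing the remainder integral by `θ` and using dominated convergence
(`tendsto_remainder_div`) gives `Ψ θ / θ → m` as `θ → 0+`. The claim follows from
`α (q - α Φ₁) = (α Φ₁) · (Ψ(Φ₁) / Φ₁)`, where `α Φ₁ = q - Φ₁ · (Ψ(Φ₁) / Φ₁) → q`.
-/

open MeasureTheory Set Filter

lemma expRem_nonneg (y : ℝ) : 0 ≤ Real.exp (-y) - 1 + y := by
  linarith [Real.add_one_le_exp (-y)]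

lemma expRem_le_sq {y : ℝ} (hy : 0 ≤ y) : Real.exp (-y) - 1 + y ≤ y ^ 2 := by
  rcases le_total y 1 with h | h
  · have h1 := Real.abs_exp_sub_one_sub_id_le (x := -y) (by rw [abs_neg, abs_of_nonneg hy]; exact h)
    have h2 := (abs_le.1 h1).2
    nlinarith
  · have : Real.exp (-y) ≤ 1 := Real.exp_le_one_iff.2 (by linarith)
    nlinarith

lemma expRem_le_self {y : ℝ} (hy : 0 ≤ y) : Real.exp (-y) - 1 + y ≤ y := by
  have : Real.exp (-y) ≤ 1 := Real.exp_le_one_iff.2 (by linarith)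
  linarith

/-- A bound integrable under the hypotheses on the Lévy measure: the quadratic estimate is used on
`(0,1)` and the linear one on `[1,∞)`. -/
lemma expRem_le_dom {θ x : ℝ} (hθ : 0 ≤ θ) (hx : 0 < x) :
    Real.exp (-(θ * x)) - 1 + θ * x ≤
      θ ^ 2 * min 1 (x ^ 2) + θ * (Ici (1 : ℝ)).indicator (fun x => x) x := by
  have hy : 0 ≤ θ * x := by positivity
  by_cases h : x < 1
  · have hm : min 1 (x ^ 2) = x ^ 2 := min_eq_right (by nlinarith)
    rw [indicator_of_notMem (by simpa using h), hm]
    linarith [expRem_le_sq hy, mul_pow θ x 2]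
  · rw [indicator_of_mem (by simpa using h)]
    have : 0 ≤ θ ^ 2 * min 1 (x ^ 2) := by positivity
    linarith [expRem_le_self hy]

lemma ae_pos_of_null {μ : Measure ℝ} (hsupp : μ (Iic 0) = 0) : ∀ᵐ x ∂μ, 0 < x := by
  rw [ae_iff]
  convert hsupp using 2
  ext x; simp

lemma integrable_expRem {μ : Measure ℝ} (hsupp : μ (Iic 0) = 0)
    (hμ : Integrable (fun x => min 1 (x ^ 2)) μ)
    (hint : IntegrableOn (fun x => x) (Ici 1) μ) {θ : ℝ} (hθ : 0 ≤ θ) :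
    Integrable (fun x => Real.exp (-(θ * x)) - 1 + θ * x) μ := by
  have hI : Integrable ((Ici (1 : ℝ)).indicator (fun x => x)) μ :=
    hint.integrable_indicator measurableSet_Ici
  refine ((hμ.const_mul (θ ^ 2)).add (hI.const_mul θ)).mono'
    (by fun_prop) ?_
  filter_upwards [ae_pos_of_null hsupp] with x hx
  rw [Real.norm_of_nonneg (expRem_nonneg _)]
  exact expRem_le_dom hθ hx

/-- Exchange of the truncated compensator for the full one. -/
lemma laplace_integral_eq {μ : Measure ℝ} (hsupp : μ (Iic 0) = 0)
    (hμ : Integrable (fun x => min 1 (x ^ 2)) μ)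
    (hint : IntegrableOn (fun x => x) (Ici 1) μ) {θ : ℝ} (hθ : 0 ≤ θ) :
    ∫ x, (Real.exp (-(θ * x)) - 1 + (if x < 1 then θ * x else 0)) ∂μ =
      (∫ x, (Real.exp (-(θ * x)) - 1 + θ * x) ∂μ) - θ * ∫ x in Ici (1 : ℝ), x ∂μ := by
  have hI : Integrable ((Ici (1 : ℝ)).indicator (fun x => x)) μ :=
    hint.integrable_indicator measurableSet_Ici
  rw [← integral_indicator measurableSet_Ici, ← integral_const_mul,
    ← integral_sub (integrable_expRem hsupp hμ hint hθ) (hI.const_mul θ)]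
  refine integral_congr_ae (Eventually.of_forall fun x => ?_)
  by_cases h : x < 1
  · simp [h]
  · simp [h, not_lt.1 h]

lemma tendsto_remainder_div {μ : Measure ℝ} (hsupp : μ (Iic 0) = 0)
    (hμ : Integrable (fun x => min 1 (x ^ 2)) μ)
    (hint : IntegrableOn (fun x => x) (Ici 1) μ) :
    Tendsto (fun θ : ℝ => (∫ x, (Real.exp (-(θ * x)) - 1 + θ * x) ∂μ) / θ)
      (nhdsWithin 0 (Ioi 0)) (nhds 0) := by
  have hI : Integrable ((Ici (1 : ℝ)).indicator (fun x => x)) μ :=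
    hint.integrable_indicator measurableSet_Ici
  have hθ1 : ∀ᶠ θ : ℝ in nhdsWithin 0 (Ioi 0), 0 < θ ∧ θ < 1 :=
    Ioo_mem_nhdsGT one_pos
  have key : Tendsto (fun θ : ℝ => ∫ x, (Real.exp (-(θ * x)) - 1 + θ * x) / θ ∂μ)
      (nhdsWithin 0 (Ioi 0)) (nhds (∫ _, (0 : ℝ) ∂μ)) := by
    refine tendsto_integral_filter_of_dominated_convergence
      (fun x => min 1 (x ^ 2) + (Ici (1 : ℝ)).indicator (fun x => x) x)
      (Eventually.of_forall fun θ => by fun_prop) ?_ (hμ.add hI) ?_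
    · filter_upwards [hθ1] with θ hθ
      filter_upwards [ae_pos_of_null hsupp] with x hx
      rw [Real.norm_of_nonneg (div_nonneg (expRem_nonneg _) hθ.1.le), div_le_iff₀ hθ.1]
      have hm : 0 ≤ min 1 (x ^ 2) := by positivity
      have : θ ^ 2 * min 1 (x ^ 2) ≤ θ * min 1 (x ^ 2) :=
        mul_le_mul_of_nonneg_right (by nlinarith [hθ.1, hθ.2]) hm
      linarith [expRem_le_dom hθ.1.le hx]
    · filter_upwards [ae_pos_of_null hsupp] with x hx
      have hlim : Tendsto (fun θ : ℝ => θ * x ^ 2) (nhdsWithin 0 (Ioi 0)) (nhds 0) := by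
        have : Tendsto (fun θ : ℝ => θ * x ^ 2) (nhds 0) (nhds (0 * x ^ 2)) :=
          Continuous.tendsto (by fun_prop) 0
        rw [zero_mul] at this
        exact this.mono_left nhdsWithin_le_nhds
      refine squeeze_zero' ?_ ?_ hlim
      · filter_upwards [hθ1] with θ hθ using div_nonneg (expRem_nonneg _) hθ.1.le
      · filter_upwards [hθ1] with θ hθ
        rw [div_le_iff₀ hθ.1]
        linarith [expRem_le_sq (mul_nonneg hθ.1.le hx.le), mul_pow θ x 2]
  simpa [integral_div] using key


/- STATEMENT 8: If ∫_{[1,∞)} x Π(dx) < ∞, so that Ψ'(0+) = c − ∫_{[1,∞)} x Π(dx)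
   exists and is finite, then α(q − αΦ₁(α)) → q·Ψ'(0+) as α → ∞. -/
theorem alpha_mul_q_sub_alpha_Phi_one_tendsto
    (c σ : ℝ) (hc : 0 < c) (hσ : 0 ≤ σ)
    (μ : Measure ℝ)
    (hsupp : μ (Set.Iic 0) = 0)
    (hμ : Integrable (fun x => min 1 (x ^ 2)) μ)
    (Ψ : ℝ → ℝ)
    (hΨ : ∀ θ : ℝ, 0 ≤ θ →
      Ψ θ = c * θ + σ ^ 2 / 2 * θ ^ 2 +
        ∫ x, (Real.exp (-(θ * x)) - 1 + (if x < 1 then θ * x else 0)) ∂μ)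
    (hint : IntegrableOn (fun x => x) (Set.Ici 1) μ)
    (q : ℝ) (hq : 0 < q)
    (Φ₁ : ℝ → ℝ)
    (hΦ₁ : ∀ α : ℝ, 0 < α → 0 < Φ₁ α ∧ Ψ (Φ₁ α) + α * Φ₁ α = q) :
    Tendsto (fun α : ℝ => α * (q - α * Φ₁ α)) atTop
      (nhds (q * (c - ∫ x in Set.Ici (1 : ℝ), x ∂μ))) := by
  set m : ℝ := c - ∫ x in Set.Ici (1 : ℝ), x ∂μ with hm
  have hΨ' : ∀ θ : ℝ, 0 ≤ θ → Ψ θ = m * θ + σ ^ 2 / 2 * θ ^ 2 +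
      ∫ x, (Real.exp (-(θ * x)) - 1 + θ * x) ∂μ := by
    intro θ hθ
    rw [hΨ θ hθ, laplace_integral_eq hsupp hμ hint hθ, hm]
    ring
  have hlow : ∀ θ : ℝ, 0 ≤ θ → m * θ ≤ Ψ θ := by
    intro θ hθ
    have h1 : 0 ≤ ∫ x, (Real.exp (-(θ * x)) - 1 + θ * x) ∂μ :=
      integral_nonneg fun x => expRem_nonneg _
    have h2 : 0 ≤ σ ^ 2 / 2 * θ ^ 2 := by positivity
    linarith [hΨ' θ hθ]
  have hratio : Tendsto (fun θ : ℝ => Ψ θ / θ) (nhdsWithin 0 (Ioi 0)) (nhds m) := by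
    have h1 : Tendsto (fun θ : ℝ => m + σ ^ 2 / 2 * θ) (nhdsWithin 0 (Ioi 0)) (nhds m) := by
      have : Tendsto (fun θ : ℝ => m + σ ^ 2 / 2 * θ) (nhds 0) (nhds (m + σ ^ 2 / 2 * 0)) :=
        Continuous.tendsto (by fun_prop) 0
      rw [mul_zero, add_zero] at this
      exact this.mono_left nhdsWithin_le_nhds
    have h2 := h1.add (tendsto_remainder_div hsupp hμ hint)
    rw [add_zero] at h2
    refine h2.congr' ?_
    filter_upwards [self_mem_nhdsWithin] with θ hθ
    have hθ : 0 < θ := hθ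
    rw [hΨ' θ hθ.le]
    field_simp
  have hΦ0 : Tendsto Φ₁ atTop (nhds 0) := by
    have hdiv : Tendsto (fun α : ℝ => q / (m + α)) atTop (nhds 0) :=
      (tendsto_atTop_add_const_left _ m tendsto_id).const_div_atTop q
    refine squeeze_zero' ?_ ?_ hdiv
    · filter_upwards [eventually_gt_atTop 0] with α hα using (hΦ₁ α hα).1.le
    · filter_upwards [eventually_gt_atTop 0, eventually_gt_atTop (-m)] with α hα hαm
      obtain ⟨hp, he⟩ := hΦ₁ α hα
      rw [le_div_iff₀ (by linarith)]
      linarith [hlow _ hp.le]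
  have hΦ : Tendsto Φ₁ atTop (nhdsWithin 0 (Ioi 0)) := by
    refine tendsto_nhdsWithin_iff.2 ⟨hΦ0, ?_⟩
    filter_upwards [eventually_gt_atTop 0] with α hα using (hΦ₁ α hα).1
  have hL : Tendsto (fun α => Ψ (Φ₁ α) / Φ₁ α) atTop (nhds m) := hratio.comp hΦ
  have hαΦ : Tendsto (fun α => q - Φ₁ α * (Ψ (Φ₁ α) / Φ₁ α)) atTop (nhds q) := by
    simpa using (hΦ0.mul hL).const_sub q
  refine (hαΦ.mul hL).congr' ?_
  filter_upwards [eventually_gt_atTop 0] with α hα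
  obtain ⟨hp, he⟩ := hΦ₁ α hα
  have h1 : Φ₁ α * (Ψ (Φ₁ α) / Φ₁ α) = Ψ (Φ₁ α) := by field_simp
  have h2 : q - Ψ (Φ₁ α) = α * Φ₁ α := by linarith
  have h3 : q - α * Φ₁ α = Ψ (Φ₁ α) := by linarith
  rw [h1, h2, h3, mul_assoc, h1]
end

section
/- V is twice differentiable on (0,b) with V''(x) = −φ e^{φ(b−x)} (1 + αφ ∫₀^{b−x} W(z) e^{−φz} dz) − αφ W(b−x) for 0 < x < b; in particular V''(x) < 0 on (0,b), so V is strictly concave on (0,b). -/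
/-!
Write `u = b - x` and `I u = ∫ z in 0..u, W z * exp (-φ z)`. By the fundamental theorem of calculus
`I' = W u * exp (-φ u)` for `u > 0`. When `V` is differentiated on `(0, b)`, the contribution
`α W u` of `exp (φ u) * I u` cancels against that of `(α / q) Z u`, leaving
`V' x = exp (φ u) * (1 + α φ I u)`, which contains no bare `W` and can be differentiated once more
although `W` is merely continuous. The resulting `V''` is negative because `W ≥ 0`, and strict
concavity follows.
-/

open MeasureTheory Set Filter

/-- Fundamental theorem of calculus for `x ↦ ∫₀^{b-x} f`, with `f` continuous only on `[0, ∞)`. -/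
lemma hasDerivAt_integral_sub {f : ℝ → ℝ} (hf : ContinuousOn f (Set.Ici 0)) {b x : ℝ}
    (hx : x < b) :
    HasDerivAt (fun y => ∫ z in (0 : ℝ)..(b - y), f z) (-f (b - x)) x := by
  have hu : 0 < b - x := sub_pos.mpr hx
  have hint : IntervalIntegrable f volume 0 (b - x) := by
    apply ContinuousOn.intervalIntegrable
    rw [Set.uIcc_of_le hu.le]
    exact hf.mono Set.Icc_subset_Ici_self
  have hmeas : StronglyMeasurableAtFilter f (nhds (b - x)) :=
    (hf.mono Set.Ioi_subset_Ici_self).stronglyMeasurableAtFilter isOpen_Ioi _ hu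
  have h := intervalIntegral.integral_hasDerivAt_right hint hmeas
    (hf.continuousAt (Ici_mem_nhds hu))
  exact (h.comp x ((hasDerivAt_id x).const_sub b)).congr_deriv (by simp)

/- STATEMENT 14: V is twice differentiable on (0,b) with
   V''(x) = −φ e^{φ(b−x)} (1 + αφ ∫₀^{b−x} W(z) e^{−φz} dz) − αφ W(b−x)
   for 0 < x < b; in particular V''(x) < 0 on (0,b), so V is strictly concave
   on (0,b). -/
theorem value_function_strictly_concave_below_threshold
    (q α φ b : ℝ) (hq : 0 < q) (hα : 0 < α) (hφ : 0 < φ) (hb : 0 < b)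
    (W : ℝ → ℝ) (hWc : ContinuousOn W (Set.Ici 0)) (hWnn : ∀ x : ℝ, 0 ≤ x → 0 ≤ W x)
    (Z : ℝ → ℝ) (hZ : ∀ u : ℝ, 0 ≤ u → Z u = 1 + q * ∫ y in (0 : ℝ)..u, W y)
    (V : ℝ → ℝ)
    (hV1 : ∀ x : ℝ, b ≤ x → V x = α / q - (1 / φ) * Real.exp (-φ * (x - b)))
    (hV2 : ∀ x : ℝ, 0 < x → x < b →
      V x = -α * Real.exp (φ * (b - x)) *
          (∫ z in (0 : ℝ)..(b - x), W z * Real.exp (-φ * z))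
        + (α / q) * Z (b - x) - Real.exp (φ * (b - x)) / φ) :
    (∀ x ∈ Set.Ioo 0 b,
        HasDerivAt (deriv V)
          (-φ * Real.exp (φ * (b - x)) *
              (1 + α * φ * ∫ z in (0 : ℝ)..(b - x), W z * Real.exp (-φ * z))
            - α * φ * W (b - x)) x ∧
        -φ * Real.exp (φ * (b - x)) *
              (1 + α * φ * ∫ z in (0 : ℝ)..(b - x), W z * Real.exp (-φ * z))
            - α * φ * W (b - x) < 0) ∧
      StrictConcaveOn ℝ (Set.Ioo 0 b) V := by
  have hGc : ContinuousOn (fun z => W z * Real.exp (-φ * z)) (Set.Ici 0) :=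
    hWc.mul (by fun_prop)
  have hE : ∀ x : ℝ, HasDerivAt (fun y => Real.exp (φ * (b - y)))
      (Real.exp (φ * (b - x)) * (-φ)) x := fun x => by
    simpa using (((hasDerivAt_id x).const_sub b).const_mul φ).exp
  have hI : ∀ x < b, HasDerivAt
      (fun y => ∫ z in (0 : ℝ)..(b - y), W z * Real.exp (-φ * z))
      (-(W (b - x) * Real.exp (-φ * (b - x)))) x := fun x hx => hasDerivAt_integral_sub hGc hx
  have hEE : ∀ x : ℝ, Real.exp (φ * (b - x)) * Real.exp (-φ * (b - x)) = 1 := fun x => by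
    rw [← Real.exp_add]; simp
  have hV' : ∀ x ∈ Set.Ioo 0 b, HasDerivAt V (Real.exp (φ * (b - x)) *
      (1 + α * φ * ∫ z in (0 : ℝ)..(b - x), W z * Real.exp (-φ * z))) x := by
    intro x hx
    have h := ((((hE x).const_mul (-α)).mul (hI x hx.2)).add
      ((((hasDerivAt_integral_sub hWc hx.2).const_mul q).const_add 1).const_mul (α / q))).sub
      ((hE x).div_const φ)
    refine (h.congr_of_eventuallyEq ?_).congr_deriv ?_
    · filter_upwards [Ioo_mem_nhds hx.1 hx.2] with y hy
      rw [hV2 y hy.1 hy.2, hZ _ (sub_pos.mpr hy.2).le]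
      rfl
    · have hEx := hEE x
      generalize Real.exp (-φ * (b - x)) = F at hEx ⊢
      field_simp
      linear_combination (α * W (b - x)) * hEx
  have hV'' : ∀ x ∈ Set.Ioo 0 b, HasDerivAt (deriv V)
      (-φ * Real.exp (φ * (b - x)) *
          (1 + α * φ * ∫ z in (0 : ℝ)..(b - x), W z * Real.exp (-φ * z))
        - α * φ * W (b - x)) x := by
    intro x hx
    have h := (hE x).mul (((hI x hx.2).const_mul (α * φ)).const_add 1)
    refine (h.congr_of_eventuallyEq ?_).congr_deriv ?_
    · filter_upwards [Ioo_mem_nhds hx.1 hx.2] with y hy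
      exact (hV' y hy).deriv
    · linear_combination (-(α * φ * W (b - x))) * hEE x
  have hneg : ∀ x ∈ Set.Ioo 0 b,
      -φ * Real.exp (φ * (b - x)) *
          (1 + α * φ * ∫ z in (0 : ℝ)..(b - x), W z * Real.exp (-φ * z))
        - α * φ * W (b - x) < 0 := by
    intro x hx
    have hu : 0 ≤ b - x := (sub_pos.mpr hx.2).le
    have hI0 : 0 ≤ ∫ z in (0 : ℝ)..(b - x), W z * Real.exp (-φ * z) :=
      intervalIntegral.integral_nonneg hu fun z hz =>
        mul_nonneg (hWnn z hz.1) (Real.exp_pos _).le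
    have h1 : 0 < φ * Real.exp (φ * (b - x)) *
        (1 + α * φ * ∫ z in (0 : ℝ)..(b - x), W z * Real.exp (-φ * z)) := by positivity
    have h2 : 0 ≤ α * φ * W (b - x) := mul_nonneg (by positivity) (hWnn _ hu)
    linarith
  refine ⟨fun x hx => ⟨hV'' x hx, hneg x hx⟩, ?_⟩
  refine strictConcaveOn_of_deriv2_neg' (convex_Ioo 0 b)
    (fun x hx => (hV' x hx).continuousAt.continuousWithinAt) fun x hx => ?_
  change deriv (deriv V) x < 0
  rw [(hV'' x hx).deriv]
  exact hneg x hx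
end

section
/- V is continuously differentiable on all of (0,∞), with V'(x) = e^{−φ(x−b)} for x ≥ b and V'(x) = e^{φ(b−x)} (1 + αφ ∫₀^{b−x} W(z) e^{−φz} dz) for 0 < x < b; in particular V is continuous at b with V(b) = α/q − 1/φ and V'(b) = 1. -/
open MeasureTheory Set Filter

/-!
Replacing `W` by its continuous extension `y ↦ W (max y 0)` turns the formula for `V` on `(0, b)`
into a function on all of `ℝ` whose derivative is given by the fundamental theorem of calculus;
the two terms `α W (b - x)` (one from the integral, one from `Z`) cancel. The formulas on the two
sides of `b`, and their derivatives, agree at `b`, so the pieces glue to a `C¹` function.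
-/

/-- The formula for `V` below `b`, with `Z` expanded, is differentiable at every real `x` as soon as
`w` is continuous on `ℝ`; this supplies the one-sided derivative at `b` too. -/
lemma hasDerivAt_left_branch {q α φ b : ℝ} (hq : 0 < q) (hφ : 0 < φ) {w : ℝ → ℝ}
    (hw : Continuous w) (x : ℝ) :
    HasDerivAt (fun x => -α * Real.exp (φ * (b - x)) *
          (∫ z in (0 : ℝ)..(b - x), w z * Real.exp (-φ * z))
        + (α / q) * (1 + q * ∫ y in (0 : ℝ)..(b - x), w y) - Real.exp (φ * (b - x)) / φ)
      (Real.exp (φ * (b - x)) *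
          (1 + α * φ * ∫ z in (0 : ℝ)..(b - x), w z * Real.exp (-φ * z))) x := by
  have hu : HasDerivAt (fun x : ℝ => b - x) (-1) x := (hasDerivAt_id x).const_sub b
  have hI := HasDerivAt.comp x ((show Continuous fun z => w z * Real.exp (-φ * z) by
    fun_prop).integral_hasStrictDerivAt 0 (b - x)).hasDerivAt hu
  have hJ := HasDerivAt.comp x (hw.integral_hasStrictDerivAt 0 (b - x)).hasDerivAt hu
  have hE : HasDerivAt (fun x : ℝ => Real.exp (φ * (b - x)))
      (Real.exp (φ * (b - x)) * (φ * (-1))) x := (hu.const_mul φ).exp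
  have h := (((hE.const_mul (-α)).mul hI).add
    (((hJ.const_mul q).const_add 1).const_mul (α / q))).sub (hE.div_const φ)
  refine h.congr_deriv ?_
  have hexp : Real.exp (φ * (b - x)) * Real.exp (-φ * (b - x)) = 1 := by
    rw [← Real.exp_add]; simp
  rw [neg_mul] at hexp
  simp only [Function.comp_apply]
  field_simp
  linear_combination α * w (b - x) * hexp

/- STATEMENT 15: V is continuously differentiable on all of (0,∞), with
   V'(x) = e^{−φ(x−b)} for x ≥ b and
   V'(x) = e^{φ(b−x)} (1 + αφ ∫₀^{b−x} W(z) e^{−φz} dz) for 0 < x < b;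
   in particular V is continuous at b with V(b) = α/q − 1/φ and V'(b) = 1. -/
theorem value_function_continuously_differentiable
    (q α φ b : ℝ) (hq : 0 < q) (hα : 0 < α) (hφ : 0 < φ) (hb : 0 < b)
    (W : ℝ → ℝ) (hWc : ContinuousOn W (Set.Ici 0)) (hWnn : ∀ x : ℝ, 0 ≤ x → 0 ≤ W x)
    (Z : ℝ → ℝ) (hZ : ∀ u : ℝ, 0 ≤ u → Z u = 1 + q * ∫ y in (0 : ℝ)..u, W y)
    (V : ℝ → ℝ)
    (hV1 : ∀ x : ℝ, b ≤ x → V x = α / q - (1 / φ) * Real.exp (-φ * (x - b)))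
    (hV2 : ∀ x : ℝ, 0 < x → x < b →
      V x = -α * Real.exp (φ * (b - x)) *
          (∫ z in (0 : ℝ)..(b - x), W z * Real.exp (-φ * z))
        + (α / q) * Z (b - x) - Real.exp (φ * (b - x)) / φ) :
    ∃ g : ℝ → ℝ,
      (∀ x : ℝ, 0 < x → HasDerivAt V (g x) x) ∧
      ContinuousOn g (Set.Ioi 0) ∧
      (∀ x : ℝ, b ≤ x → g x = Real.exp (-φ * (x - b))) ∧
      (∀ x : ℝ, 0 < x → x < b →
        g x = Real.exp (φ * (b - x)) *
          (1 + α * φ * ∫ z in (0 : ℝ)..(b - x), W z * Real.exp (-φ * z))) ∧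
      ContinuousAt V b ∧ V b = α / q - 1 / φ ∧ g b = 1 := by
  set w : ℝ → ℝ := fun y => W (max y 0) with hw_def
  have hw : Continuous w :=
    hWc.comp_continuous (by fun_prop) fun y => le_max_right y 0
  have hwW : ∀ z : ℝ, 0 ≤ z → w z = W z := fun z hz => by simp [hw_def, max_eq_left hz]
  have hI : ∀ u : ℝ, 0 ≤ u → ∫ z in (0 : ℝ)..u, W z * Real.exp (-φ * z) =
      ∫ z in (0 : ℝ)..u, w z * Real.exp (-φ * z) := fun u hu => by
    refine intervalIntegral.integral_congr fun z hz => ?_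
    rw [uIcc_of_le hu] at hz
    simp only [hwW z hz.1]
  have hJ : ∀ u : ℝ, 0 ≤ u → ∫ y in (0 : ℝ)..u, W y = ∫ y in (0 : ℝ)..u, w y := fun u hu => by
    refine intervalIntegral.integral_congr fun z hz => ?_
    rw [uIcc_of_le hu] at hz
    exact (hwW z hz.1).symm
  have hL := hasDerivAt_left_branch (α := α) (b := b) hq hφ hw
  set L : ℝ → ℝ := fun x => -α * Real.exp (φ * (b - x)) *
          (∫ z in (0 : ℝ)..(b - x), w z * Real.exp (-φ * z))
        + (α / q) * (1 + q * ∫ y in (0 : ℝ)..(b - x), w y) - Real.exp (φ * (b - x)) / φ with hL_def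
  set dL : ℝ → ℝ := fun x => Real.exp (φ * (b - x)) *
          (1 + α * φ * ∫ z in (0 : ℝ)..(b - x), w z * Real.exp (-φ * z)) with hdL_def
  set R : ℝ → ℝ := fun x => α / q - (1 / φ) * Real.exp (-φ * (x - b)) with hR_def
  set dR : ℝ → ℝ := fun x => Real.exp (-φ * (x - b)) with hdR_def
  have hR : ∀ x, HasDerivAt R (dR x) x := fun x => by
    have hE : HasDerivAt (fun x : ℝ => Real.exp (-φ * (x - b)))
        (Real.exp (-φ * (x - b)) * (-φ * 1)) x :=
      (((hasDerivAt_id x).sub_const b).const_mul (-φ)).exp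
    refine ((hE.const_mul (1 / φ)).const_sub (α / q)).congr_deriv ?_
    simp only [hdR_def]
    field_simp
  have hdLc : Continuous dL := by
    have h0 : Continuous fun u : ℝ => ∫ z in (0 : ℝ)..u, w z * Real.exp (-φ * z) :=
      continuous_iff_continuousAt.2 fun u =>
        ((show Continuous fun z => w z * Real.exp (-φ * z) by
          fun_prop).integral_hasStrictDerivAt 0 u).hasDerivAt.continuousAt
    have h1 := h0.comp (show Continuous fun x : ℝ => b - x by fun_prop)
    simp only [Function.comp_def] at h1
    exact (by fun_prop : Continuous fun x : ℝ => Real.exp (φ * (b - x))).mul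
      (continuous_const.add (continuous_const.mul h1))
  have hdRc : Continuous dR := by fun_prop
  have hLb : L b = R b := by simp [hL_def, hR_def]
  have hGb : dL b = dR b := by simp [hdL_def, hdR_def]
  have hVR : ∀ x, b ≤ x → V x = R x := hV1
  have hVL : ∀ x, 0 < x → x ≤ b → V x = L x := fun x hx hxb => by
    rcases hxb.lt_or_eq with h | rfl
    · have hu : 0 ≤ b - x := by linarith
      rw [hV2 x hx h, hZ _ hu, hI _ hu, hJ _ hu]
    · rw [hLb, hVR x le_rfl]
  have hVd : ∀ x, 0 < x → HasDerivAt V (if b ≤ x then dR x else dL x) x := fun x hx => by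
    rcases lt_trichotomy x b with h | rfl | h
    · rw [if_neg h.not_ge]
      refine (hL x).congr_of_eventuallyEq ?_
      filter_upwards [Ioo_mem_nhds hx h] with y hy using hVL y hy.1 hy.2.le
    · rw [if_pos le_rfl]
      have hr : HasDerivWithinAt V (dR x) (Ici x) x :=
        (hR x).hasDerivWithinAt.congr (fun y hy => hVR y hy) (hVR x le_rfl)
      have hl : HasDerivWithinAt V (dR x) (Iic x) x := by
        rw [← hGb]
        refine (hL x).hasDerivWithinAt.congr_of_eventuallyEq ?_ (hVL x hx le_rfl)
        filter_upwards [self_mem_nhdsWithin, mem_nhdsWithin_of_mem_nhds (Ioi_mem_nhds hx)]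
          with y hy hy0 using hVL y hy0 hy
      have := hl.union hr
      rwa [Iic_union_Ici, hasDerivWithinAt_univ] at this
    · rw [if_pos h.le]
      refine (hR x).congr_of_eventuallyEq ?_
      filter_upwards [Ioi_mem_nhds h] with y hy using hVR y (le_of_lt hy)
  refine ⟨fun x => if b ≤ x then dR x else dL x, hVd, ?_, fun x hx => if_pos hx,
    fun x hx hxb => ?_, (hVd b hb).continuousAt, ?_, ?_⟩
  · refine (Continuous.if_le hdRc hdLc continuous_const continuous_id ?_).continuousOn
    rintro x rfl
    exact hGb.symm
  · simp only [if_neg hxb.not_ge, hdL_def]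
    rw [hI _ (by linarith)]
  · simp [hVR b le_rfl, hR_def]
  · simp [hdR_def]
end

section
/- v(α) → Z̄(b)/Z(b) + m/(q Z(b)) − m/q as α → ∞. -/
/-!
Since `φ α → 0`, dominated convergence on `[0, b]` removes the factor `exp (-φ α z)` in the limit, so
the two integrals tend to `∫ W = (Z b - 1) / q` and `∫ Z = Zbar b`. Writing `A`, `B`, `C` as products
of these integrals with `α φ α → q` and `α (q - α φ α) → q m` gives `A α → Z b`,
`B α → σ² / 2 * W b - Zbar b` and `C α → m (Z b - 1) / q`. As `Z b ≥ 1`, the quotient converges.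
-/

open MeasureTheory Set Filter

lemma tendsto_integral_mul_exp_neg {b : ℝ} (hb : 0 < b) {g φ : ℝ → ℝ}
    (hg : IntervalIntegrable g volume 0 b) (hφ0 : Tendsto φ atTop (nhds 0)) :
    Tendsto (fun α => ∫ z in (0 : ℝ)..b, g z * Real.exp (-φ α * z)) atTop
      (nhds (∫ z in (0 : ℝ)..b, g z)) := by
  -- Once `|φ α| < 1`, the integrand on `[0, b]` is dominated by `|g| * exp b`.
  apply intervalIntegral.tendsto_integral_filter_of_dominated_convergence
    (fun z => ‖g z‖ * Real.exp b)
  · filter_upwards with α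
    exact hg.aestronglyMeasurable_restrict_uIoc.mul
      (by fun_prop : Continuous fun z : ℝ => Real.exp (-φ α * z)).aestronglyMeasurable
  · have h1 : ∀ᶠ α in atTop, |φ α| < 1 := by
      have := hφ0.abs
      rw [abs_zero] at this
      exact this.eventually (gt_mem_nhds one_pos)
    filter_upwards [h1] with α hα
    filter_upwards with z hz
    rw [uIoc_of_le hb.le] at hz
    rw [norm_mul, Real.norm_of_nonneg (Real.exp_pos _).le]
    have := (abs_lt.mp hα).1
    gcongr
    nlinarith [hz.1, hz.2]
  · exact hg.norm.mul_const _
  · filter_upwards with z _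
    have h : Tendsto (fun α => g z * Real.exp (-φ α * z)) atTop
        (nhds (g z * Real.exp (-0 * z))) :=
      ((Real.continuous_exp.tendsto _).comp (hφ0.neg.mul_const z)).const_mul (g z)
    simpa using h



/- STATEMENT 17: v(α) → Z̄(b)/Z(b) + m/(q Z(b)) − m/q as α → ∞, where
   v(α) = ((σ²/2)W(b) − B_α − C_α)/A_α with A_α, B_α, C_α as in the paper,
   φ(α) → 0, αφ(α) → q and α(q − αφ(α)) → qm as α → ∞. -/
theorem value_at_threshold_tendsto_barrier_limit
    (q b σ m : ℝ) (hq : 0 < q) (hb : 0 < b) (hσ : 0 ≤ σ)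
    (W : ℝ → ℝ) (hWc : ContinuousOn W (Set.Ici 0)) (hWnn : ∀ x : ℝ, 0 ≤ x → 0 ≤ W x)
    (Z Zbar : ℝ → ℝ)
    (hZ : ∀ u : ℝ, 0 ≤ u → Z u = 1 + q * ∫ y in (0 : ℝ)..u, W y)
    (hZbar : ∀ u : ℝ, 0 ≤ u → Zbar u = ∫ z in (0 : ℝ)..u, Z z)
    (φ : ℝ → ℝ) (hφpos : ∀ α : ℝ, 0 < α → 0 < φ α)
    (hφ0 : Tendsto φ atTop (nhds 0))
    (hφq : Tendsto (fun α : ℝ => α * φ α) atTop (nhds q))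
    (hφm : Tendsto (fun α : ℝ => α * (q - α * φ α)) atTop (nhds (q * m)))
    (A B C v : ℝ → ℝ)
    (hA : ∀ α : ℝ, A α = Real.exp (φ α * b) - σ ^ 2 / 2 * φ α * W b +
      α * φ α * Real.exp (φ α * b) *
        ∫ z in (0 : ℝ)..b, W z * Real.exp (-φ α * z))
    (hB : ∀ α : ℝ, B α = (α / q) * (σ ^ 2 / 2 * φ α * W b -
      φ α * Real.exp (φ α * b) * ∫ z in (0 : ℝ)..b, Z z * Real.exp (-φ α * z)))
    (hC : ∀ α : ℝ, C α = (α / q) * (q - α * φ α) * Real.exp (φ α * b) *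
      ∫ z in (0 : ℝ)..b, W z * Real.exp (-φ α * z))
    (hv : ∀ α : ℝ, v α = (σ ^ 2 / 2 * W b - B α - C α) / A α) :
    Tendsto v atTop (nhds (Zbar b / Z b + m / (q * Z b) - m / q)) := by
  have hWi : IntervalIntegrable W volume 0 b :=
    (hWc.mono (by rw [uIcc_of_le hb.le]; exact Icc_subset_Ici_self)).intervalIntegrable
  have hZi : IntervalIntegrable Z volume 0 b := by
    have hc : ContinuousOn (fun u => 1 + q * ∫ y in (0 : ℝ)..u, W y) (uIcc 0 b) :=
      continuousOn_const.add (continuousOn_const.mul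
        (intervalIntegral.continuousOn_primitive_interval' hWi left_mem_uIcc))
    refine (hc.congr fun u hu => hZ u ?_).intervalIntegrable
    rw [uIcc_of_le hb.le] at hu
    exact hu.1
  have hIW := tendsto_integral_mul_exp_neg hb hWi hφ0
  have hIZ := tendsto_integral_mul_exp_neg hb hZi hφ0
  rw [← hZbar b hb.le] at hIZ
  have hZb := hZ b hb.le
  have hWint : 0 ≤ ∫ y in (0 : ℝ)..b, W y :=
    intervalIntegral.integral_nonneg hb.le fun x hx => hWnn x hx.1
  have hZpos : 0 < Z b := by rw [hZb]; positivity
  set I := ∫ y in (0 : ℝ)..b, W y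
  have hexp : Tendsto (fun α => Real.exp (φ α * b)) atTop (nhds 1) := by
    simpa using (hφ0.mul_const b).rexp
  have hAl : Tendsto A atTop (nhds (Z b)) := by
    have h := (hexp.sub ((hφ0.const_mul (σ ^ 2 / 2)).mul_const (W b))).add
      ((hφq.mul hexp).mul hIW)
    rw [hZb]
    refine (h.congr fun α => (hA α).symm).trans (le_of_eq ?_)
    congr 1
    ring
  have hBl : Tendsto B atTop (nhds (σ ^ 2 / 2 * W b - Zbar b)) := by
    have h := ((hφq.const_mul (σ ^ 2 / 2 * W b)).sub ((hφq.mul hexp).mul hIZ)).const_mul (1 / q)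
    refine (h.congr fun α => ?_).trans (le_of_eq ?_)
    · rw [hB α]
      ring
    · congr 1
      field_simp
  have hCl : Tendsto C atTop (nhds (m * I)) := by
    have h := ((hφm.mul hexp).mul hIW).const_mul (1 / q)
    refine (h.congr fun α => ?_).trans (le_of_eq ?_)
    · rw [hC α]
      ring
    · congr 1
      field_simp
  have hvl := ((tendsto_const_nhds (x := σ ^ 2 / 2 * W b)).sub hBl |>.sub hCl).div hAl hZpos.ne'
  refine (hvl.congr fun α => (hv α).symm).trans (le_of_eq ?_)
  congr 1
  have hI : I = (Z b - 1) / q := by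
    rw [hZb]
    field_simp
    ring
  rw [hI]
  field_simp
  ring
end

section
/- For every fixed x with 0 < x < b, V_α(x) → (Z̄(b)/Z(b)) Z(b−x) − Z̄(b−x) + (m/q)(Z(b−x)/Z(b) − 1) as α → ∞. -/
/-!
Every ingredient of `Va α x` converges separately. Since `φ α → 0`, dominated convergence on the
compact interval `[0, u]` turns the exponentially weighted integrals of `W` and `Z` into the
plain ones (`tendsto_integral_mul_exp`). Combined with `α φ(α) → q` and `α (q - α φ(α)) → q m`
this gives, at each level `u ≥ 0`, the limits `Z u`, `(σ² / 2) W u - Zbar u` and `m (Z u - 1) / q`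
of the three brackets, where `∫₀ᵘ W = (Z u - 1) / q`. Taking `u = b` yields the limit of `v α`,
whose denominator tends to `Z b ≥ 1`; taking `u = b - x` gives the remaining terms.
-/

open MeasureTheory Set Filter

theorem tendsto_integral_mul_exp (f φ : ℝ → ℝ) (u : ℝ) (hu : 0 ≤ u)
    (hf : ContinuousOn f (Set.Icc 0 u)) (hφ0 : Tendsto φ atTop (nhds 0)) :
    Tendsto (fun α : ℝ => ∫ z in (0 : ℝ)..u, f z * Real.exp (-φ α * z)) atTop
      (nhds (∫ z in (0 : ℝ)..u, f z)) := by
  have hfi : IntervalIntegrable f volume 0 u :=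
    ContinuousOn.intervalIntegrable (by rwa [Set.uIcc_of_le hu])
  -- Once `-φ α ≤ 1`, the weight `exp (-φ α * z)` is at most `exp u` on `[0, u]`.
  refine intervalIntegral.tendsto_integral_filter_of_dominated_convergence
    (fun z => |f z| * Real.exp u) ?_ ?_ ?_ ?_
  · refine Eventually.of_forall fun α => ?_
    exact (hfi.mul_continuousOn (by fun_prop)).def'.aestronglyMeasurable
  · filter_upwards [hφ0.eventually (lt_mem_nhds (show (-1 : ℝ) < 0 by norm_num))] with α hα
    refine Eventually.of_forall fun z hz => ?_
    rw [Set.uIoc_of_le hu] at hz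
    rw [Real.norm_eq_abs, abs_mul, Real.abs_exp]
    gcongr
    nlinarith [hz.1, hz.2]
  · exact hfi.abs.mul_const _
  · refine Eventually.of_forall fun z _ => ?_
    have h : Tendsto (fun α => f z * Real.exp (-φ α * z)) atTop
        (nhds (f z * Real.exp (-0 * z))) :=
      ((Real.continuous_exp.tendsto _).comp (hφ0.neg.mul_const z)).const_mul (f z)
    simpa using h

/- STATEMENT 18: For every fixed x with 0 < x < b,
   V_α(x) → (Z̄(b)/Z(b)) Z(b−x) − Z̄(b−x) + (m/q)(Z(b−x)/Z(b) − 1) as α → ∞,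
   where V_α is the threshold value function built from A_α, B_α, C_α, v(α)
   and φ(α) → 0, αφ(α) → q, α(q − αφ(α)) → qm as α → ∞. -/
theorem value_function_tendsto_barrier_value
    (q b σ m : ℝ) (hq : 0 < q) (hb : 0 < b) (hσ : 0 ≤ σ)
    (W : ℝ → ℝ) (hWc : ContinuousOn W (Set.Ici 0)) (hWnn : ∀ x : ℝ, 0 ≤ x → 0 ≤ W x)
    (Z Zbar : ℝ → ℝ)
    (hZ : ∀ u : ℝ, 0 ≤ u → Z u = 1 + q * ∫ y in (0 : ℝ)..u, W y)
    (hZbar : ∀ u : ℝ, 0 ≤ u → Zbar u = ∫ z in (0 : ℝ)..u, Z z)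
    (φ : ℝ → ℝ) (hφpos : ∀ α : ℝ, 0 < α → 0 < φ α)
    (hφ0 : Tendsto φ atTop (nhds 0))
    (hφq : Tendsto (fun α : ℝ => α * φ α) atTop (nhds q))
    (hφm : Tendsto (fun α : ℝ => α * (q - α * φ α)) atTop (nhds (q * m)))
    (A B C v : ℝ → ℝ)
    (hA : ∀ α : ℝ, A α = Real.exp (φ α * b) - σ ^ 2 / 2 * φ α * W b +
      α * φ α * Real.exp (φ α * b) *
        ∫ z in (0 : ℝ)..b, W z * Real.exp (-φ α * z))
    (hB : ∀ α : ℝ, B α = (α / q) * (σ ^ 2 / 2 * φ α * W b -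
      φ α * Real.exp (φ α * b) * ∫ z in (0 : ℝ)..b, Z z * Real.exp (-φ α * z)))
    (hC : ∀ α : ℝ, C α = (α / q) * (q - α * φ α) * Real.exp (φ α * b) *
      ∫ z in (0 : ℝ)..b, W z * Real.exp (-φ α * z))
    (hv : ∀ α : ℝ, v α = (σ ^ 2 / 2 * W b - B α - C α) / A α)
    (Va : ℝ → ℝ → ℝ)
    (hVa : ∀ α x : ℝ, 0 < x → x < b →
      Va α x = -(σ ^ 2 / 2) * W (b - x)
        + v α * (Real.exp (φ α * (b - x)) - σ ^ 2 / 2 * φ α * W (b - x) +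
            α * φ α * Real.exp (φ α * (b - x)) *
              ∫ z in (0 : ℝ)..(b - x), W z * Real.exp (-φ α * z))
        + (α / q) * (σ ^ 2 / 2 * φ α * W (b - x) -
            φ α * Real.exp (φ α * (b - x)) *
              ∫ z in (0 : ℝ)..(b - x), Z z * Real.exp (-φ α * z))
        + (α / q) * (q - α * φ α) * Real.exp (φ α * (b - x)) *
            ∫ z in (0 : ℝ)..(b - x), W z * Real.exp (-φ α * z))
    (x : ℝ) (hx0 : 0 < x) (hxb : x < b) :
    Tendsto (fun α : ℝ => Va α x) atTop
      (nhds ((Zbar b / Z b) * Z (b - x) - Zbar (b - x) +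
        (m / q) * (Z (b - x) / Z b - 1))) := by
  have hWu : ∀ u : ℝ, ContinuousOn W (Set.Icc 0 u) := fun u =>
    hWc.mono Set.Icc_subset_Ici_self
  have hZu : ∀ u : ℝ, 0 ≤ u → ContinuousOn Z (Set.Icc 0 u) := by
    intro u hu
    have hi : IntegrableOn W (Set.uIcc 0 u) volume := by
      rw [Set.uIcc_of_le hu]
      exact (hWu u).integrableOn_Icc
    have hc := intervalIntegral.continuousOn_primitive_interval hi
    rw [Set.uIcc_of_le hu] at hc
    exact ((hc.const_mul q).const_add 1).congr fun z hz => hZ z hz.1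
  have hIW : ∀ u : ℝ, 0 ≤ u → ∫ z in (0 : ℝ)..u, W z = (Z u - 1) / q := by
    intro u hu
    rw [hZ u hu]
    field_simp
    ring
  have hexp : ∀ u : ℝ, Tendsto (fun α => Real.exp (φ α * u)) atTop (nhds 1) := by
    intro u
    have h : Tendsto (fun α => Real.exp (φ α * u)) atTop (nhds (Real.exp (0 * u))) :=
      (Real.continuous_exp.tendsto _).comp (hφ0.mul_const u)
    simpa using h
  have limW : ∀ u : ℝ, 0 ≤ u →
      Tendsto (fun α : ℝ => ∫ z in (0 : ℝ)..u, W z * Real.exp (-φ α * z)) atTop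
        (nhds ((Z u - 1) / q)) := by
    intro u hu
    rw [← hIW u hu]
    exact tendsto_integral_mul_exp W φ u hu (hWu u) hφ0
  have limZ : ∀ u : ℝ, 0 ≤ u →
      Tendsto (fun α : ℝ => ∫ z in (0 : ℝ)..u, Z z * Real.exp (-φ α * z)) atTop
        (nhds (Zbar u)) := by
    intro u hu
    rw [hZbar u hu]
    exact tendsto_integral_mul_exp Z φ u hu (hZu u hu) hφ0
  have limA : ∀ u : ℝ, 0 ≤ u → Tendsto (fun α : ℝ =>
      Real.exp (φ α * u) - σ ^ 2 / 2 * φ α * W u + α * φ α * Real.exp (φ α * u) *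
        ∫ z in (0 : ℝ)..u, W z * Real.exp (-φ α * z)) atTop (nhds (Z u)) := by
    intro u hu
    convert ((hexp u).sub ((hφ0.const_mul (σ ^ 2 / 2)).mul_const (W u))).add
      ((hφq.mul (hexp u)).mul (limW u hu)) using 2
    field_simp
    ring
  have limB : ∀ u : ℝ, 0 ≤ u → Tendsto (fun α : ℝ =>
      (α / q) * (σ ^ 2 / 2 * φ α * W u - φ α * Real.exp (φ α * u) *
        ∫ z in (0 : ℝ)..u, Z z * Real.exp (-φ α * z))) atTop
      (nhds (σ ^ 2 / 2 * W u - Zbar u)) := by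
    intro u hu
    have h := (hφq.div_const q).mul
      (((hexp u).mul (limZ u hu)).const_sub (σ ^ 2 / 2 * W u))
    rw [div_self hq.ne', one_mul, one_mul] at h
    refine h.congr fun α => ?_
    ring
  have limC : ∀ u : ℝ, 0 ≤ u → Tendsto (fun α : ℝ =>
      (α / q) * (q - α * φ α) * Real.exp (φ α * u) *
        ∫ z in (0 : ℝ)..u, W z * Real.exp (-φ α * z)) atTop
      (nhds (m * ((Z u - 1) / q))) := by
    intro u hu
    have h := ((hφm.div_const q).mul (hexp u)).mul (limW u hu)
    rw [mul_div_cancel_left₀ m hq.ne', mul_one] at h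
    refine h.congr fun α => ?_
    ring
  have hZb : Z b ≠ 0 := by
    have h : 0 ≤ ∫ y in (0 : ℝ)..b, W y :=
      intervalIntegral.integral_nonneg hb.le fun y hy => hWnn y hy.1
    rw [hZ b hb.le]
    positivity
  have limv : Tendsto v atTop (nhds ((σ ^ 2 / 2 * W b - (σ ^ 2 / 2 * W b - Zbar b) -
      m * ((Z b - 1) / q)) / Z b)) := by
    rw [funext hv]
    simp only [hA, hB, hC]
    exact (((limB b hb.le).const_sub _).sub (limC b hb.le)).div (limA b hb.le) hZb
  have hy : 0 ≤ b - x := by linarith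
  rw [funext fun α => hVa α x hx0 hxb]
  convert (((limv.mul (limA (b - x) hy)).const_add (-(σ ^ 2 / 2) * W (b - x))).add
    (limB (b - x) hy)).add (limC (b - x) hy) using 2
  field_simp
  ring
end
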